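/- Let v, w be non-increasing positive functions on I=(0,a), 0<a≤∞, with ∫₀ˣ v dm ≤ ∫₀ˣ w dm < ∞ for every x∈I (i.e. v ≺ w), and let h : I → [0,∞) be non-increasing with ∫₀ˣ h^{*,w} dm < ∞ for all x. Then h^{*,v} ≺ h^{*,w}, i.e. for every x > 0, ∫₀ˣ h^{*,v} dm ≤ ∫₀ˣ h^{*,w} dm, where h^{*,v} and h^{*,w} denote the decreasing rearrangements of h with respect to the measures v·dm and w·dm respectively. -/

import Mathlib

open MeasureTheory Set Filter
open scoped ENNReal

/-- The interval `(0, a)` for `a : ℝ≥0∞` (equals `(0,∞)` when `a = ∞`). -/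
def Iset (a : ℝ≥0∞) : Set ℝ := {x : ℝ | 0 < x ∧ ENNReal.ofReal x < a}

/-- Lebesgue measure restricted to the interval `(0,a)`. -/
noncomputable def volI (a : ℝ≥0∞) : Measure ℝ := volume.restrict (Iset a)

/-- Decreasing rearrangement of an `ℝ≥0∞`-valued function with respect to a measure `μ`:
`f^{*,μ}(t) = inf {s > 0 : μ({f > s}) ≤ t}`. -/
noncomputable def rearrE (μ : Measure ℝ) (f : ℝ → ℝ≥0∞) (t : ℝ) : ℝ≥0∞ :=
  sInf {s : ℝ≥0∞ | 0 < s ∧ μ {x | s < f x} ≤ ENNReal.ofReal t}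

/-- Decreasing rearrangement of a real function with respect to a measure `μ` on `ℝ`:
`f^{*,μ}(t) = inf {s > 0 : μ({|f| > s}) ≤ t}`. -/
noncomputable def rearr (μ : Measure ℝ) (f : ℝ → ℝ) (t : ℝ) : ℝ≥0∞ :=
  rearrE μ (fun x => ENNReal.ofReal |f x|) t

/-- The measure `w·dm` on the set `I`. -/
noncomputable def wMeas (I : Set ℝ) (w : ℝ → ℝ) : Measure ℝ :=
  (volume.restrict I).withDensity (fun t => ENNReal.ofReal (w t))

/-- `W(t) = ∫₀ᵗ w dm`. -/
noncomputable def Wfun (w : ℝ → ℝ) (t : ℝ) : ℝ := ∫ s in Set.Ioo (0:ℝ) t, w s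

/-- `b = ∫_I w dm` as an extended real number. -/
noncomputable def bval (a : ℝ≥0∞) (w : ℝ → ℝ) : ℝ≥0∞ := ∫⁻ x in Iset a, ENNReal.ofReal (w x)

/-!
The superlevel sets of a non-increasing `h` are initial segments of `(0, a)`, up to an endpoint, and
`v ≺ w` says exactly that `v·dm ≤ w·dm` on initial segments. Hence the distribution function of `h`
with respect to `v·dm` is at most the one with respect to `w·dm`, so the rearrangements are already
comparable pointwise.
-/

section InitialSegments

variable {α : Type*} [LinearOrder α] [TopologicalSpace α] [ClosedIciTopology α]
  [SecondCountableTopology α] [MeasurableSpace α] {μ ν : Measure α} [NullSingletonClass μ]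

lemma measure_le_measure_lowerClosure {S : Set α} (hle : ∀ x ∈ S, μ (Iio x) ≤ ν (Iio x)) :
    μ S ≤ ν (lowerClosure S) := by
  have Iio_subset : ∀ x ∈ S, Iio x ⊆ (lowerClosure S : Set α) := fun x hx y hy =>
    mem_lowerClosure.2 ⟨x, hx, hy.le⟩
  by_cases hmax : ∃ x, IsGreatest S x
  · obtain ⟨x, hxS, hx⟩ := hmax
    calc μ S ≤ μ (Iic x) := measure_mono hx
      _ = μ (Iio x) := measure_congr Iio_ae_eq_Iic.symm
      _ ≤ ν (Iio x) := hle x hxS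
      _ ≤ ν (lowerClosure S) := measure_mono (Iio_subset x hxS)
  · have subset_iUnion_Iio : S ⊆ ⋃ x ∈ S, Iio x := fun y hy => by
      by_contra hy'
      simp only [mem_iUnion, mem_Iio, exists_prop, not_exists, not_and, not_lt] at hy'
      exact hmax ⟨y, hy, hy'⟩
    obtain ⟨T, hTS, hT, hT_eq⟩ :=
      TopologicalSpace.isOpen_biUnion_countable S Iio fun _ _ => isOpen_Iio
    have directed : DirectedOn (Function.onFun (· ⊆ ·) Iio) T := fun x hx y hy =>
      (le_total x y).elim (fun h => ⟨y, hy, Iio_subset_Iio h, subset_rfl⟩)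
        fun h => ⟨x, hx, subset_rfl, Iio_subset_Iio h⟩
    calc μ S ≤ μ (⋃ x ∈ T, Iio x) := measure_mono (hT_eq ▸ subset_iUnion_Iio)
      _ = ⨆ x ∈ T, μ (Iio x) := measure_biUnion_eq_iSup hT directed
      _ ≤ ν (lowerClosure S) := iSup₂_le fun x hx =>
        (hle x (hTS hx)).trans (measure_mono (Iio_subset x (hTS hx)))

lemma measure_superlevel_le {β : Type*} [Preorder β] {f : α → β} {I : Set α}
    (hf : AntitoneOn f I) (hμ : μ Iᶜ = 0) (hν : ν Iᶜ = 0)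
    (hle : ∀ x ∈ I, μ (Iio x) ≤ ν (Iio x)) (s : β) :
    μ {x | s < f x} ≤ ν {x | s < f x} := by
  have lowerClosure_inter_subset :
      (lowerClosure ({x | s < f x} ∩ I) : Set α) ∩ I ⊆ {x | s < f x} := by
    rintro y ⟨hy, hyI⟩
    obtain ⟨x, ⟨hx, hxI⟩, hyx⟩ := mem_lowerClosure.1 hy
    exact hx.trans_le (hf hyI hxI hyx)
  calc μ {x | s < f x} = μ ({x | s < f x} ∩ I) := (measure_inter_conull hμ).symm
    _ ≤ ν (lowerClosure ({x | s < f x} ∩ I)) :=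
      measure_le_measure_lowerClosure fun x hx => hle x hx.2
    _ = ν ((lowerClosure ({x | s < f x} ∩ I) : Set α) ∩ I) := (measure_inter_conull hν).symm
    _ ≤ ν {x | s < f x} := measure_mono lowerClosure_inter_subset

end InitialSegments

lemma rearrE_le_rearrE {μ ν : Measure ℝ} {f : ℝ → ℝ≥0∞}
    (hle : ∀ s, μ {x | s < f x} ≤ ν {x | s < f x}) (t : ℝ) : rearrE μ f t ≤ rearrE ν f t :=
  sInf_le_sInf fun s hs => ⟨hs.1, (hle s).trans hs.2⟩

lemma measurableSet_Iset (a : ℝ≥0∞) : MeasurableSet (Iset a) :=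
  measurableSet_Ioi.inter (measurableSet_lt ENNReal.measurable_ofReal measurable_const)

lemma Iio_inter_Iset {a : ℝ≥0∞} {x : ℝ} (hx : x ∈ Iset a) : Iio x ∩ Iset a = Ioo 0 x := by
  ext y
  exact ⟨fun hy => ⟨hy.2.1, hy.1⟩,
    fun hy => ⟨hy.2, hy.1, (ENNReal.ofReal_le_ofReal hy.2.le).trans_lt hx.2⟩⟩

instance nullSingletonClass_wMeas (I : Set ℝ) (w : ℝ → ℝ) : NullSingletonClass (wMeas I w) :=
  nullSingletonClass_withDensity _

lemma wMeas_apply {I : Set ℝ} (hI : MeasurableSet I) (w : ℝ → ℝ) (S : Set ℝ) :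
    wMeas I w S = ∫⁻ t in S ∩ I, ENNReal.ofReal (w t) := by
  rw [wMeas, withDensity_apply', Measure.restrict_restrict' hI]

lemma wMeas_compl {I : Set ℝ} (hI : MeasurableSet I) (w : ℝ → ℝ) : wMeas I w Iᶜ = 0 := by
  rw [wMeas_apply hI, compl_inter_self, Measure.restrict_empty, lintegral_zero_measure]

lemma wMeas_Iset_Iio {a : ℝ≥0∞} {x : ℝ} (hx : x ∈ Iset a) (w : ℝ → ℝ) :
    wMeas (Iset a) w (Iio x) = ∫⁻ t in Ioo 0 x, ENNReal.ofReal (w t) := by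
  rw [wMeas_apply (measurableSet_Iset a), Iio_inter_Iset hx]

theorem stmt_12_general {a : ℝ≥0∞} {v w : ℝ → ℝ} {f : ℝ → ℝ≥0∞}
    (hsub : ∀ x ∈ Iset a,
      ∫⁻ t in Ioo 0 x, ENNReal.ofReal (v t) ≤ ∫⁻ t in Ioo 0 x, ENNReal.ofReal (w t))
    (hf : AntitoneOn f (Iset a)) (t : ℝ) :
    rearrE (wMeas (Iset a) v) f t ≤ rearrE (wMeas (Iset a) w) f t := by
  have hI := measurableSet_Iset a
  refine rearrE_le_rearrE
    (measure_superlevel_le hf (wMeas_compl hI v) (wMeas_compl hI w) fun x hx => ?_) t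
  rw [wMeas_Iset_Iio hx, wMeas_Iset_Iio hx]
  exact hsub x hx

/-- If `v, w` are non-increasing positive weights on `I` with `v ≺ w`
(`∫₀ˣ v ≤ ∫₀ˣ w < ∞` on `I`) and `h ≥ 0` is non-increasing with locally integrable `h^{*,w}`,
then `h^{*,v} ≺ h^{*,w}`. -/
theorem stmt_12 (a : ℝ≥0∞) (ha : 0 < a) (v w h : ℝ → ℝ)
    (hv_pos : ∀ x ∈ Iset a, 0 < v x) (hv_anti : AntitoneOn v (Iset a)) (hv_meas : Measurable v)
    (hw_pos : ∀ x ∈ Iset a, 0 < w x) (hw_anti : AntitoneOn w (Iset a)) (hw_meas : Measurable w)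
    (hsub : ∀ x ∈ Iset a,
      ∫⁻ t in Set.Ioo 0 x, ENNReal.ofReal (v t) ≤ ∫⁻ t in Set.Ioo 0 x, ENNReal.ofReal (w t))
    (hW_fin : ∀ x ∈ Iset a, ∫⁻ t in Set.Ioo 0 x, ENNReal.ofReal (w t) ≠ ∞)
    (hh_meas : Measurable h) (hh0 : ∀ x ∈ Iset a, 0 ≤ h x) (hh_anti : AntitoneOn h (Iset a))
    (hfin : ∀ x : ℝ, 0 < x → ∫⁻ t in Set.Ioo 0 x, rearr (wMeas (Iset a) w) h t ≠ ∞)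
    (x : ℝ) (hx : 0 < x) :
    ∫⁻ t in Set.Ioo 0 x, rearr (wMeas (Iset a) v) h t
      ≤ ∫⁻ t in Set.Ioo 0 x, rearr (wMeas (Iset a) w) h t := by
  have habs : AntitoneOn (fun y => ENNReal.ofReal |h y|) (Iset a) :=
    (ENNReal.ofReal_mono.comp_antitoneOn hh_anti).congr fun y hy => by
      simp only [Function.comp_apply, abs_of_nonneg (hh0 y hy)]
  exact lintegral_mono fun t => stmt_12_general hsub habs t
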